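/- Let X be a measurable space and let Q and Q̃ be weighted evolution operators on X, with Q satisfying the minorization condition with constant ε ∈ (0,1) and probability measure η. Suppose T and U are positive linear operators on the bounded measurable functions on X for which there exists α > 0 such that α φ ≤ Uφ ≤ α⁻¹ φ and α φ ≤ Tφ ≤ α⁻¹ φ pointwise for every bounded measurable φ ≥ 0, and suppose (Q̃)ⁿ = T ∘ Qⁿ ∘ U for every n ≥ 1. Then Q̃ also satisfies a minorization condition (with constant εα² and measure η), so both Q and Q̃ admit unique invariant probability measures ν and ν̃; and the associated principal eigenvalues coincide: ν(Q1) = ν̃(Q̃1), i.e., for any fixed Δt > 0, (1/Δt)·log ν(Q1) = (1/Δt)·log ν̃(Q̃1). -/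

import Mathlib

open MeasureTheory ProbabilityTheory

/-- The action of a weighted evolution operator given by a kernel `κ`:
`(Qφ)(q) = ∫ φ(q') κ(q, dq')`. -/
noncomputable def evolOp {X : Type*} [MeasurableSpace X] (κ : Kernel X X) (φ : X → ℝ) : X → ℝ :=
  fun q => ∫ q', φ q' ∂(κ q)

/-- Bounded measurable real-valued functions. -/
def BddMeas {X : Type*} [MeasurableSpace X] (φ : X → ℝ) : Prop :=
  Measurable φ ∧ ∃ C : ℝ, ∀ x, |φ x| ≤ C

/-- Minorization condition: `ε η(φ) ≤ (Qφ)(q) ≤ ε⁻¹ η(φ)` for all bounded measurable `φ ≥ 0`. -/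
def Minorizes {X : Type*} [MeasurableSpace X] (Q : (X → ℝ) → (X → ℝ)) (ε : ℝ)
    (η : Measure X) : Prop :=
  ∀ φ : X → ℝ, BddMeas φ → (∀ x, 0 ≤ φ x) → ∀ q,
    ε * ∫ x, φ x ∂η ≤ Q φ q ∧ Q φ q ≤ ε⁻¹ * ∫ x, φ x ∂η

/-- The discretized Feynman–Kac semigroup `Φ_n(μ)(φ) = μ(Qⁿφ)/μ(Qⁿ1)`. -/
noncomputable def FK {X : Type*} [MeasurableSpace X] (κ : Kernel X X) (μ : Measure X)
    (n : ℕ) (φ : X → ℝ) : ℝ :=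
  (∫ q, (evolOp κ)^[n] φ q ∂μ) / (∫ q, (evolOp κ)^[n] (fun _ => (1:ℝ)) q ∂μ)

/-- Fixed-point (stationarity) equation: `μ(Qφ) = μ(Q1)·μ(φ)` for all bounded measurable φ. -/
def FixedPt {X : Type*} [MeasurableSpace X] (κ : Kernel X X) (μ : Measure X) : Prop :=
  ∀ φ : X → ℝ, BddMeas φ →
    ∫ q, evolOp κ φ q ∂μ = (∫ q, evolOp κ (fun _ => (1:ℝ)) q ∂μ) * ∫ q, φ q ∂μ

open Filter Topology

section Helpers

variable {X : Type*} [MeasurableSpace X]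

theorem bm_const (c : ℝ) : BddMeas (fun _ : X => c) :=
  ⟨measurable_const, |c|, fun _ => le_rfl⟩

theorem bm_lin {φ ψ : X → ℝ} (hφ : BddMeas φ) (hψ : BddMeas ψ) (a b : ℝ) :
    BddMeas (fun x => a * φ x + b * ψ x) := by
  obtain ⟨mφ, C, hC⟩ := hφ
  obtain ⟨mψ, D, hD⟩ := hψ
  refine ⟨(mφ.const_mul a).add (mψ.const_mul b), |a| * C + |b| * D, fun x => ?_⟩
  refine (abs_add_le _ _).trans ?_
  rw [abs_mul, abs_mul]
  gcongr
  · exact hC x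
  · exact hD x

theorem bm_abs {φ : X → ℝ} (hφ : BddMeas φ) : BddMeas (fun x => |φ x|) := by
  obtain ⟨mφ, C, hC⟩ := hφ
  exact ⟨by fun_prop, C, fun x => by simpa using hC x⟩

theorem bm_indicator {s : Set X} (hs : MeasurableSet s) :
    BddMeas (s.indicator (fun _ => (1:ℝ))) := by
  refine ⟨measurable_const.indicator hs, 1, fun x => ?_⟩
  by_cases h : x ∈ s <;> simp [h]

theorem bm_int {φ : X → ℝ} (hφ : BddMeas φ) (μ : Measure X) [IsFiniteMeasure μ] :
    Integrable φ μ := by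
  obtain ⟨mφ, C, hC⟩ := hφ
  exact Integrable.of_bound mφ.aestronglyMeasurable C (Eventually.of_forall hC)

theorem int_lin {φ ψ : X → ℝ} (hφ : BddMeas φ) (hψ : BddMeas ψ) (a b : ℝ)
    (μ : Measure X) [IsFiniteMeasure μ] :
    ∫ x, (a * φ x + b * ψ x) ∂μ = a * ∫ x, φ x ∂μ + b * ∫ x, ψ x ∂μ := by
  rw [integral_add ((bm_int hφ μ).const_mul a) ((bm_int hψ μ).const_mul b),
    integral_const_mul, integral_const_mul]

theorem L_tendsto (η : Measure X) [IsProbabilityMeasure η] (L : (X → ℝ) → ℝ) (C : ℝ)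
    (hlin : ∀ φ ψ, BddMeas φ → BddMeas ψ → ∀ a b : ℝ,
      L (fun x => a * φ x + b * ψ x) = a * L φ + b * L ψ)
    (hpos : ∀ φ, BddMeas φ → (∀ x, 0 ≤ φ x) → 0 ≤ L φ)
    (hdom : ∀ φ, BddMeas φ → (∀ x, 0 ≤ φ x) → L φ ≤ C * ∫ x, φ x ∂η)
    (φ : ℕ → X → ℝ) (ψ : X → ℝ) (K : ℝ) (hm : ∀ n, Measurable (φ n))
    (hK : ∀ n x, |φ n x| ≤ K) (hψ : BddMeas ψ)
    (hlim : ∀ x, Tendsto (fun n => φ n x) atTop (𝓝 (ψ x))) :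
    Tendsto (fun n => L (φ n)) atTop (𝓝 (L ψ)) := by
  have hb : ∀ n, BddMeas (φ n) := fun n => ⟨hm n, K, hK n⟩
  have hd : ∀ n, BddMeas (fun x => 1 * φ n x + (-1) * ψ x) := fun n => bm_lin (hb n) hψ 1 (-1)
  have hle : ∀ n, |L (φ n) - L ψ| ≤ C * ∫ x, |1 * φ n x + (-1) * ψ x| ∂η := by
    intro n
    have e := hlin _ _ (hb n) hψ 1 (-1)
    have ha := bm_abs (hd n)
    have p1 := hpos _ (bm_lin ha (hd n) 1 1) (fun x => by
      have := neg_abs_le (1 * φ n x + (-1) * ψ x); linarith)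
    have p2 := hpos _ (bm_lin ha (hd n) 1 (-1)) (fun x => by
      have := le_abs_self (1 * φ n x + (-1) * ψ x); linarith)
    rw [hlin _ _ ha (hd n)] at p1 p2
    have := hdom _ ha (fun x => abs_nonneg _)
    rw [abs_le]
    constructor <;> linarith
  have h0 : Tendsto (fun n => C * ∫ x, |1 * φ n x + (-1) * ψ x| ∂η) atTop (𝓝 0) := by
    have : Tendsto (fun n => ∫ x, |1 * φ n x + (-1) * ψ x| ∂η) atTop (𝓝 (∫ x, (0:ℝ) ∂η)) := by
      obtain ⟨mψ, D, hD⟩ := hψ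
      refine tendsto_integral_of_dominated_convergence (fun _ => K + D)
        (fun n => (bm_abs (hd n)).1.aestronglyMeasurable) (integrable_const _) ?_ ?_
      · intro n
        refine Eventually.of_forall fun x => ?_
        rw [Real.norm_eq_abs, abs_abs]
        have h1 := abs_le.1 (hK n x)
        have h2 := abs_le.1 (hD x)
        rw [abs_le]; constructor <;> linarith
      · refine Eventually.of_forall fun x => ?_
        have := (((hlim x).const_mul 1).add_const ((-1) * ψ x)).abs
        simpa using this
    simpa using this.const_mul C
  rw [tendsto_iff_dist_tendsto_zero]
  exact squeeze_zero (fun _ => dist_nonneg) (fun n => by rw [Real.dist_eq]; exact hle n) h0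

theorem L_repr (η : Measure X) [IsProbabilityMeasure η] (L : (X → ℝ) → ℝ) (C : ℝ)
    (hlin : ∀ φ ψ, BddMeas φ → BddMeas ψ → ∀ a b : ℝ,
      L (fun x => a * φ x + b * ψ x) = a * L φ + b * L ψ)
    (hpos : ∀ φ, BddMeas φ → (∀ x, 0 ≤ φ x) → 0 ≤ L φ)
    (hdom : ∀ φ, BddMeas φ → (∀ x, 0 ≤ φ x) → L φ ≤ C * ∫ x, φ x ∂η)
    (hone : L (fun _ => 1) = 1) :
    ∃ ν : Measure X, IsProbabilityMeasure ν ∧ ∀ φ, BddMeas φ → L φ = ∫ x, φ x ∂ν := by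
  have hzero : L (fun _ => 0) = 0 := by
    have := hlin _ _ (bm_const (X := X) 0) (bm_const 0) 0 0
    simpa using this
  have hcont := L_tendsto η L C hlin hpos hdom
  have hind0 : ∀ s : Set X, MeasurableSet s → 0 ≤ L (s.indicator fun _ => 1) := fun s hs =>
    hpos _ (bm_indicator hs) (fun x => Set.indicator_nonneg (by simp) x)
  have hsum : ∀ f : ℕ → Set X, (∀ i, MeasurableSet (f i)) → Pairwise (Function.onFun Disjoint f) →
      ∀ n, L ((⋃ i ∈ Finset.range n, f i).indicator fun _ => 1)
        = ∑ i ∈ Finset.range n, L ((f i).indicator fun _ => 1) := by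
    intro f hf hd n
    induction n with
    | zero => simpa using hzero
    | succ n ih =>
      rw [Finset.sum_range_succ, ← ih]
      have hm : MeasurableSet (⋃ i ∈ Finset.range n, f i) :=
        Finset.measurableSet_biUnion _ (fun i _ => hf i)
      have := hlin _ _ (bm_indicator hm) (bm_indicator (hf n)) 1 1
      rw [one_mul, one_mul] at this
      rw [← this]
      congr 1
      have hdis : Disjoint (⋃ i ∈ Finset.range n, f i) (f n) := by
        simp only [Set.disjoint_iUnion_left]
        intro i hi
        exact hd (by simp at hi; omega)
      rw [Finset.range_add_one, Finset.set_biUnion_insert, Set.union_comm,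
        Set.indicator_union_of_disjoint hdis]
      simp
  let ν : Measure X := Measure.ofMeasurable
    (fun s _ => ENNReal.ofReal (L (s.indicator fun _ => 1))) (by simp [hzero]) (by
      intro f hf hd
      refine tendsto_nhds_unique ?_ (ENNReal.tendsto_nat_tsum _)
      have e : ∀ n, ∑ i ∈ Finset.range n, ENNReal.ofReal (L ((f i).indicator fun _ => 1))
          = ENNReal.ofReal (L ((⋃ i ∈ Finset.range n, f i).indicator fun _ => 1)) := by
        intro n
        rw [hsum f hf hd n, ENNReal.ofReal_sum_of_nonneg (fun i _ => hind0 _ (hf i))]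
      simp only [e]
      refine (ENNReal.continuous_ofReal.tendsto _).comp ?_
      refine hcont _ _ 1 (fun n => (bm_indicator
        (Finset.measurableSet_biUnion _ (fun i _ => hf i))).1) ?_
        (bm_indicator (MeasurableSet.iUnion hf)) ?_
      · intro n x
        by_cases h : x ∈ ⋃ i ∈ Finset.range n, f i
        · rw [Set.indicator_of_mem h]; simp
        · rw [Set.indicator_of_notMem h]; simp
      · intro x
        refine tendsto_const_nhds.congr' ?_
        by_cases h : x ∈ ⋃ i, f i
        · obtain ⟨j, hj⟩ := Set.mem_iUnion.1 h
          filter_upwards [eventually_gt_atTop j] with n hn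
          rw [Set.indicator_of_mem h, Set.indicator_of_mem]
          simp only [Set.mem_iUnion]
          exact ⟨j, by simpa using hn, hj⟩
        · refine Eventually.of_forall fun n => ?_
          beta_reduce
          rw [Set.indicator_of_notMem h, Set.indicator_of_notMem]
          intro h'
          simp only [Set.mem_iUnion] at h'
          obtain ⟨j, _, hj⟩ := h'
          exact h (Set.mem_iUnion.2 ⟨j, hj⟩))
  have hν : ∀ s, MeasurableSet s → ν s = ENNReal.ofReal (L (s.indicator fun _ => 1)) :=
    fun s hs => Measure.ofMeasurable_apply s hs
  have hνP : IsProbabilityMeasure ν := ⟨by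
    rw [hν _ MeasurableSet.univ, Set.indicator_univ, hone, ENNReal.ofReal_one]⟩
  refine ⟨ν, hνP, ?_⟩
  have hbs : ∀ f : SimpleFunc X ℝ, BddMeas f := fun f => by
    obtain ⟨C, hC⟩ := f.exists_forall_norm_le
    exact ⟨f.measurable, C, hC⟩
  have hsimple : ∀ f : SimpleFunc X ℝ, L f = ∫ x, f x ∂ν := by
    intro f
    induction f using SimpleFunc.induction with
    | const c hs =>
      rename_i s
      have e : (⇑(SimpleFunc.piecewise s hs (SimpleFunc.const X c) (SimpleFunc.const X 0)) : X → ℝ)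
          = fun x => c * s.indicator (fun _ => (1:ℝ)) x + 0 * (fun _ => (0:ℝ)) x := by
        funext x
        by_cases h : x ∈ s <;> simp [h]
      rw [e, hlin _ _ (bm_indicator hs) (bm_const 0), int_lin (bm_indicator hs) (bm_const 0),
        integral_indicator_const _ hs, Measure.real, hν s hs, ENNReal.toReal_ofReal (hind0 s hs)]
      simp
    | add hd hf hg =>
      rename_i f g
      have e : (⇑(f + g) : X → ℝ) = fun x => 1 * f x + 1 * g x := by
        funext x; simp
      rw [e, hlin _ _ (hbs f) (hbs g), int_lin (hbs f) (hbs g), hf, hg]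
  intro φ hφ
  obtain ⟨D, hD⟩ := hφ.2
  have hD' : ∀ x, |φ x| ≤ |D| := fun x => (hD x).trans (le_abs_self D)
  have sm := hφ.1.stronglyMeasurable
  have t1 := hcont (fun n => sm.approxBounded |D| n) φ |D| (fun n => SimpleFunc.measurable _)
    (fun n x => sm.norm_approxBounded_le (abs_nonneg D) n x) hφ
    (fun x => sm.tendsto_approxBounded_of_norm_le (hD' x))
  have t2 : Tendsto (fun n => ∫ x, sm.approxBounded |D| n x ∂ν) atTop (𝓝 (∫ x, φ x ∂ν)) :=
    tendsto_integral_of_dominated_convergence (fun _ => |D|)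
      (fun n => (SimpleFunc.measurable _).aestronglyMeasurable) (integrable_const _)
      (fun n => Eventually.of_forall fun x => sm.norm_approxBounded_le (abs_nonneg D) n x)
      (Eventually.of_forall fun x => sm.tendsto_approxBounded_of_norm_le (hD' x))
  simp only [hsimple] at t1
  exact tendsto_nhds_unique t1 t2

theorem Q_bm (κ : Kernel X X) [IsFiniteKernel κ] {φ : X → ℝ} (hφ : BddMeas φ) :
    BddMeas (evolOp κ φ) := by
  refine ⟨(StronglyMeasurable.integral_kernel (κ := κ) hφ.1.stronglyMeasurable).measurable, ?_⟩
  obtain ⟨C, hC⟩ := hφ.2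
  refine ⟨|C| * κ.bound.toReal, fun q => ?_⟩
  have h := norm_integral_le_of_norm_le_const (μ := κ q) (f := φ) (C := |C|)
    (Eventually.of_forall fun x => (hC x).trans (le_abs_self C))
  refine h.trans ?_
  gcongr
  exact ENNReal.toReal_mono κ.bound_ne_top (κ.measure_le_bound q _)

theorem Qn_bm (κ : Kernel X X) [IsFiniteKernel κ] {φ : X → ℝ} (hφ : BddMeas φ) (n : ℕ) :
    BddMeas ((evolOp κ)^[n] φ) := by
  induction n with
  | zero => simpa using hφ
  | succ n ih => rw [Function.iterate_succ_apply']; exact Q_bm κ ih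

theorem Q_lin (κ : Kernel X X) [IsFiniteKernel κ] {φ ψ : X → ℝ} (hφ : BddMeas φ)
    (hψ : BddMeas ψ) (a b : ℝ) :
    evolOp κ (fun x => a * φ x + b * ψ x) = fun x => a * evolOp κ φ x + b * evolOp κ ψ x := by
  funext q
  exact int_lin hφ hψ a b (κ q)

theorem Qn_lin (κ : Kernel X X) [IsFiniteKernel κ] {φ ψ : X → ℝ} (hφ : BddMeas φ)
    (hψ : BddMeas ψ) (a b : ℝ) (n : ℕ) :
    (evolOp κ)^[n] (fun x => a * φ x + b * ψ x)
      = fun x => a * (evolOp κ)^[n] φ x + b * (evolOp κ)^[n] ψ x := by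
  induction n with
  | zero => rfl
  | succ n ih =>
    simp only [Function.iterate_succ_apply']
    rw [ih, Q_lin κ (Qn_bm κ hφ n) (Qn_bm κ hψ n)]

theorem Qn_mono (κ : Kernel X X) [IsFiniteKernel κ] {φ ψ : X → ℝ} (hφ : BddMeas φ)
    (hψ : BddMeas ψ) (h : ∀ x, φ x ≤ ψ x) (n : ℕ) (q : X) :
    (evolOp κ)^[n] φ q ≤ (evolOp κ)^[n] ψ q := by
  induction n generalizing q with
  | zero => exact h q
  | succ n ih =>
    simp only [Function.iterate_succ_apply']
    exact integral_mono (bm_int (Qn_bm κ hφ n) _) (bm_int (Qn_bm κ hψ n) _) ih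

theorem Qn_nonneg (κ : Kernel X X) {φ : X → ℝ} (h : ∀ x, 0 ≤ φ x) (n : ℕ) (q : X) :
    0 ≤ (evolOp κ)^[n] φ q := by
  induction n generalizing q with
  | zero => exact h q
  | succ n ih =>
    rw [Function.iterate_succ_apply']
    exact integral_nonneg ih

theorem Qn_const_le (κ : Kernel X X) [IsFiniteKernel κ] {φ : X → ℝ} (hφ : BddMeas φ)
    {c : ℝ} (h : ∀ x, φ x ≤ c) (n : ℕ) (q : X) :
    (evolOp κ)^[n] φ q ≤ c * (evolOp κ)^[n] (fun _ => 1) q := by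
  have h1 := Qn_mono κ hφ (bm_lin (bm_const 1) (bm_const 1) c 0) (fun x => by simpa using h x) n q
  rw [Qn_lin κ (bm_const 1) (bm_const 1)] at h1
  simpa using h1

theorem Qn_const_ge (κ : Kernel X X) [IsFiniteKernel κ] {φ : X → ℝ} (hφ : BddMeas φ)
    {c : ℝ} (h : ∀ x, c ≤ φ x) (n : ℕ) (q : X) :
    c * (evolOp κ)^[n] (fun _ => 1) q ≤ (evolOp κ)^[n] φ q := by
  have h1 := Qn_mono κ (bm_lin (bm_const 1) (bm_const 1) c 0) hφ (fun x => by simpa using h x) n q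
  rw [Qn_lin κ (bm_const 1) (bm_const 1)] at h1
  simpa using h1

theorem Q1_ge {κ : Kernel X X} {ε : ℝ} {η : Measure X} [IsProbabilityMeasure η]
    (hmin : Minorizes (evolOp κ) ε η) (q : X) : ε ≤ evolOp κ (fun _ => 1) q := by
  have := (hmin (fun _ => 1) (bm_const 1) (fun _ => zero_le_one) q).1
  simpa using this

theorem Qn1_ge {κ : Kernel X X} [IsFiniteKernel κ] {ε : ℝ} (hε : 0 < ε) {η : Measure X}
    [IsProbabilityMeasure η]
    (hmin : Minorizes (evolOp κ) ε η) (n : ℕ) (q : X) :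
    ε ^ n ≤ (evolOp κ)^[n] (fun _ => 1) q := by
  induction n generalizing q with
  | zero => simp
  | succ n ih =>
    rw [Function.iterate_succ_apply, pow_succ']
    refine le_trans ?_ (Qn_const_ge κ (Q_bm κ (bm_const 1)) (Q1_ge hmin) n q)
    exact mul_le_mul_of_nonneg_left (ih q) hε.le

theorem int_Qn1_pos {κ : Kernel X X} [IsFiniteKernel κ] {ε : ℝ} (hε : 0 < ε) {η : Measure X}
    [IsProbabilityMeasure η]
    (hmin : Minorizes (evolOp κ) ε η) (n : ℕ) (ρ : Measure X) [IsProbabilityMeasure ρ] :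
    0 < ∫ q, (evolOp κ)^[n] (fun _ => 1) q ∂ρ := by
  have h := integral_mono (integrable_const (μ := ρ) (ε ^ n)) (bm_int (Qn_bm κ (bm_const 1) n) ρ)
    (Qn1_ge hε hmin n)
  have h2 : 0 < ε ^ n := pow_pos hε n
  simp at h
  linarith

theorem sandwich_step {κ : Kernel X X} [IsFiniteKernel κ] {ε : ℝ} (hε : 0 < ε) {η : Measure X}
    [IsProbabilityMeasure η]
    (hmin : Minorizes (evolOp κ) ε η) {f g : X → ℝ} (hf : BddMeas f) (hg : BddMeas g)
    (g0 : ∀ x, 0 ≤ g x) (gpos : 0 < ∫ x, g x ∂η) (a : ℝ)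
    (h : ∀ x, a * g x ≤ f x) (q : X) :
    (a + ε ^ 2 * ((∫ x, f x ∂η) / (∫ x, g x ∂η) - a)) * evolOp κ g q ≤ evolOp κ f q := by
  have h1 := (hmin _ (bm_lin hf hg 1 (-a)) (fun x => by have := h x; linarith) q).1
  have h2 := (hmin _ hg g0 q).2
  have h3 : 0 ≤ ∫ x, (1 * f x + (-a) * g x) ∂η :=
    integral_nonneg (fun x => by have := h x; simp only [Pi.zero_apply]; linarith)
  rw [Q_lin κ hf hg, int_lin hf hg] at h1
  rw [int_lin hf hg] at h3
  set F := ∫ x, f x ∂η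
  set G := ∫ x, g x ∂η
  have h4 : 0 ≤ F / G - a := by
    rw [sub_nonneg, le_div_iff₀ gpos]; linarith
  have h5 : ε ^ 2 * (F / G - a) * evolOp κ g q ≤ ε ^ 2 * (F / G - a) * (ε⁻¹ * G) :=
    mul_le_mul_of_nonneg_left h2 (by positivity)
  have h6 : ε ^ 2 * (F / G - a) * (ε⁻¹ * G) = ε * (1 * F + -a * G) := by
    field_simp
    ring
  linarith

theorem FK_conv {κ : Kernel X X} [IsFiniteKernel κ] {ε : ℝ} (hε : ε ∈ Set.Ioo (0:ℝ) 1)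
    {η : Measure X} [IsProbabilityMeasure η]
    (hmin : Minorizes (evolOp κ) ε η) {φ : X → ℝ} (hφ : BddMeas φ) :
    ∃ l : ℝ, ∀ ρ : Measure X, IsProbabilityMeasure ρ →
      Tendsto (fun n => FK κ ρ n φ) atTop (𝓝 l) := by
  have e0 := hε.1
  have e1 := hε.2
  obtain ⟨C, hC⟩ := hφ.2
  have b1 : BddMeas (fun _ : X => (1:ℝ)) := bm_const 1
  let r : ℕ → ℝ := fun n => FK κ η n φ
  let a : ℕ → ℝ := fun n => Nat.rec (-C) (fun n a => a + ε ^ 2 * (r n - a)) n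
  let b : ℕ → ℝ := fun n => Nat.rec C (fun n a => a + ε ^ 2 * (r n - a)) n
  have ha : ∀ n, a (n + 1) = a n + ε ^ 2 * (r n - a n) := fun n => rfl
  have hb : ∀ n, b (n + 1) = b n + ε ^ 2 * (r n - b n) := fun n => rfl
  have key : ∀ n q, a n * (evolOp κ)^[n] (fun _ => 1) q ≤ (evolOp κ)^[n] φ q ∧
      (evolOp κ)^[n] φ q ≤ b n * (evolOp κ)^[n] (fun _ => 1) q := by
    intro n
    induction n with
    | zero =>
      intro q
      have := abs_le.1 (hC q)
      simp only [Function.iterate_zero, id, mul_one]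
      exact this
    | succ n ih =>
      intro q
      have g0 : ∀ x, 0 ≤ (evolOp κ)^[n] (fun _ => 1) x := Qn_nonneg κ (fun _ => zero_le_one) n
      have gp := int_Qn1_pos e0 hmin n η
      simp only [Function.iterate_succ_apply']
      constructor
      · exact sandwich_step e0 hmin (Qn_bm κ hφ n) (Qn_bm κ b1 n) g0 gp (a n)
          (fun x => (ih x).1) q
      · have h := sandwich_step e0 hmin (bm_lin (Qn_bm κ hφ n) (Qn_bm κ hφ n) (-1) 0)
          (Qn_bm κ b1 n) g0 gp (-b n) (fun x => by have := (ih x).2; linarith) q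
        rw [Q_lin κ (Qn_bm κ hφ n) (Qn_bm κ hφ n), int_lin (Qn_bm κ hφ n) (Qn_bm κ hφ n)] at h
        rw [hb]
        simp only [r, FK]
        have e : -b n + ε ^ 2 * ((-1 * ∫ x, (evolOp κ)^[n] φ x ∂η + 0 * ∫ x, (evolOp κ)^[n] φ x ∂η)
            / (∫ x, (evolOp κ)^[n] (fun _ => 1) x ∂η) - -b n)
            = -(b n + ε ^ 2 * ((∫ x, (evolOp κ)^[n] φ x ∂η)
            / (∫ x, (evolOp κ)^[n] (fun _ => 1) x ∂η) - b n)) := by ring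
        rw [e] at h
        linarith
  have mem : ∀ ρ : Measure X, IsProbabilityMeasure ρ → ∀ n,
      a n ≤ FK κ ρ n φ ∧ FK κ ρ n φ ≤ b n := by
    intro ρ hρ n
    have gp := int_Qn1_pos e0 hmin n ρ
    unfold FK
    rw [le_div_iff₀ gp, div_le_iff₀ gp, ← integral_const_mul, ← integral_const_mul]
    exact ⟨integral_mono ((bm_int (Qn_bm κ b1 n) ρ).const_mul _) (bm_int (Qn_bm κ hφ n) ρ)
        (fun q => (key n q).1),
      integral_mono (bm_int (Qn_bm κ hφ n) ρ) ((bm_int (Qn_bm κ b1 n) ρ).const_mul _)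
        (fun q => (key n q).2)⟩
  have am : Monotone a := monotone_nat_of_le_succ (fun n => by
    rw [ha]
    have := (mem η inferInstance n).1
    have : 0 ≤ ε ^ 2 * (r n - a n) := mul_nonneg (by positivity) (sub_nonneg.2 this)
    linarith)
  have bm : Antitone b := antitone_nat_of_succ_le (fun n => by
    rw [hb]
    have := (mem η inferInstance n).2
    have : 0 ≤ ε ^ 2 * (b n - r n) := mul_nonneg (by positivity) (sub_nonneg.2 this)
    linarith)
  have hab : ∀ n, b n - a n = (1 - ε ^ 2) ^ n * (C - -C) := by
    intro n
    induction n with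
    | zero => simp [a, b]
    | succ n ih => rw [ha, hb]; linear_combination (1 - ε ^ 2) * ih
  have ale : ∀ n, a n ≤ b n := fun n =>
    (mem η inferInstance n).1.trans (mem η inferInstance n).2
  have ta : Tendsto a atTop (𝓝 (⨆ n, a n)) :=
    tendsto_atTop_ciSup am ⟨b 0, by
      rintro _ ⟨n, rfl⟩
      exact (ale n).trans (bm (Nat.zero_le n))⟩
  have tab : Tendsto (fun n => b n - a n) atTop (𝓝 0) := by
    simp only [hab]
    have := (tendsto_pow_atTop_nhds_zero_of_lt_one (r := 1 - ε ^ 2) (by nlinarith)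
      (by nlinarith)).mul_const (C - -C)
    simpa using this
  have tb : Tendsto b atTop (𝓝 (⨆ n, a n)) := by
    have := tab.add ta
    simpa using this
  exact ⟨_, fun ρ hρ => tendsto_of_tendsto_of_tendsto_of_le_of_le ta tb
    (fun n => (mem ρ hρ n).1) (fun n => (mem ρ hρ n).2)⟩

theorem FixedPt.iter {κ : Kernel X X} [IsFiniteKernel κ] {ρ : Measure X} [IsProbabilityMeasure ρ]
    (h : FixedPt κ ρ) {φ : X → ℝ} (hφ : BddMeas φ) (n : ℕ) :
    ∫ q, (evolOp κ)^[n] φ q ∂ρ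
      = (∫ q, evolOp κ (fun _ => (1:ℝ)) q ∂ρ) ^ n * ∫ q, φ q ∂ρ := by
  induction n with
  | zero => simp
  | succ n ih =>
    simp only [Function.iterate_succ_apply']
    rw [h _ (Qn_bm κ hφ n), ih]; ring

theorem ergodic {κ : Kernel X X} [IsFiniteKernel κ] {ε : ℝ} (hε : ε ∈ Set.Ioo (0:ℝ) 1)
    {η : Measure X} [IsProbabilityMeasure η] (hmin : Minorizes (evolOp κ) ε η) :
    ∃ ν : Measure X, IsProbabilityMeasure ν ∧ FixedPt κ ν ∧
      ∀ ρ : Measure X, IsProbabilityMeasure ρ → FixedPt κ ρ → ρ = ν := by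
  have e0 := hε.1
  have b1 : BddMeas (fun _ : X => (1:ℝ)) := bm_const 1
  have hex : ∀ φ : X → ℝ, ∃ l : ℝ, BddMeas φ → ∀ ρ : Measure X, IsProbabilityMeasure ρ →
      Tendsto (fun n => FK κ ρ n φ) atTop (𝓝 l) := by
    intro φ
    by_cases hφ : BddMeas φ
    · obtain ⟨l, hl⟩ := FK_conv hε hmin hφ
      exact ⟨l, fun _ => hl⟩
    · exact ⟨0, fun h => absurd h hφ⟩
  choose L hL using hex
  have gp := fun n => int_Qn1_pos e0 hmin n η
  have hone : L (fun _ => 1) = 1 := by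
    refine tendsto_nhds_unique (hL _ b1 η inferInstance) ?_
    refine tendsto_const_nhds.congr fun n => ?_
    exact (div_self (gp n).ne').symm
  have hlin : ∀ φ ψ, BddMeas φ → BddMeas ψ → ∀ a b : ℝ,
      L (fun x => a * φ x + b * ψ x) = a * L φ + b * L ψ := by
    intro φ ψ hφ hψ a b
    refine tendsto_nhds_unique (hL _ (bm_lin hφ hψ a b) η inferInstance) ?_
    refine (((hL _ hφ η inferInstance).const_mul a).add
      ((hL _ hψ η inferInstance).const_mul b)).congr fun n => ?_
    unfold FK
    rw [Qn_lin κ hφ hψ, int_lin (Qn_bm κ hφ n) (Qn_bm κ hψ n)]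
    ring
  have hpos : ∀ φ, BddMeas φ → (∀ x, 0 ≤ φ x) → 0 ≤ L φ := by
    intro φ hφ h
    refine ge_of_tendsto' (hL _ hφ η inferInstance) fun n => ?_
    exact div_nonneg (integral_nonneg (Qn_nonneg κ h n)) (gp n).le
  have hdom : ∀ φ, BddMeas φ → (∀ x, 0 ≤ φ x) → L φ ≤ (ε⁻¹ * ε⁻¹) * ∫ x, φ x ∂η := by
    intro φ hφ h
    refine le_of_tendsto' ((hL _ hφ η inferInstance).comp (tendsto_add_atTop_nat 1)) fun n => ?_
    simp only [Function.comp, FK]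
    have I0 : 0 ≤ ∫ x, φ x ∂η := integral_nonneg h
    rw [div_le_iff₀ (gp (n + 1))]
    simp only [Function.iterate_succ_apply]
    have i1 : ∫ q, (evolOp κ)^[n] (evolOp κ φ) q ∂η
        ≤ ∫ q, (ε⁻¹ * ∫ x, φ x ∂η) * (evolOp κ)^[n] (fun _ => 1) q ∂η :=
      integral_mono (bm_int (Qn_bm κ (Q_bm κ hφ) n) η) ((bm_int (Qn_bm κ b1 n) η).const_mul _)
        (Qn_const_le κ (Q_bm κ hφ) (fun x => (hmin φ hφ h x).2) n)
    have i2 : ∫ q, ε * (evolOp κ)^[n] (fun _ => 1) q ∂η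
        ≤ ∫ q, (evolOp κ)^[n] (evolOp κ (fun _ => 1)) q ∂η :=
      integral_mono ((bm_int (Qn_bm κ b1 n) η).const_mul _) (bm_int (Qn_bm κ (Q_bm κ b1) n) η)
        (Qn_const_ge κ (Q_bm κ b1) (Q1_ge hmin) n)
    rw [integral_const_mul] at i1 i2
    refine i1.trans ?_
    have i3 := mul_le_mul_of_nonneg_left i2
      (show 0 ≤ (ε⁻¹ * ε⁻¹) * ∫ x, φ x ∂η by positivity)
    refine le_trans (le_of_eq ?_) i3
    field_simp
  obtain ⟨ν, hνP, hν⟩ := L_repr η L _ hlin hpos hdom hone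
  refine ⟨ν, hνP, ?_, ?_⟩
  · intro φ hφ
    rw [← hν _ (Q_bm κ hφ), ← hν _ (Q_bm κ b1), ← hν _ hφ]
    refine tendsto_nhds_unique (hL _ (Q_bm κ hφ) η inferInstance) ?_
    refine ((hL _ (Q_bm κ b1) η inferInstance).mul
      ((hL _ hφ η inferInstance).comp (tendsto_add_atTop_nat 1))).congr fun n => ?_
    have g1 := (gp n).ne'
    have g2 := (gp (n + 1)).ne'
    simp only [Function.comp, FK]
    simp only [Function.iterate_succ_apply] at g2 ⊢
    field_simp
  · intro ρ hρ hfix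
    have hρL : ∀ φ, BddMeas φ → ∫ x, φ x ∂ρ = L φ := by
      intro φ hφ
      refine tendsto_nhds_unique ?_ (hL φ hφ ρ hρ)
      refine tendsto_const_nhds.congr fun n => ?_
      have g := (int_Qn1_pos e0 hmin n ρ).ne'
      unfold FK
      rw [eq_div_iff g, hfix.iter hφ, hfix.iter b1]
      simp [mul_comm]
    ext s hs
    have h := (hρL _ (bm_indicator hs)).trans (hν _ (bm_indicator hs))
    rw [integral_indicator_const _ hs, integral_indicator_const _ hs] at h
    simp only [smul_eq_mul, mul_one] at h
    exact (ENNReal.toReal_eq_toReal_iff' (measure_ne_top _ _) (measure_ne_top _ _)).1 h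

theorem pow_dom {x y C : ℝ} (hx : 0 < x) (hy : 0 < y)
    (h : ∀ n : ℕ, 1 ≤ n → x ^ n ≤ C * y ^ n) : x ≤ y := by
  by_contra hlt
  push Not at hlt
  have h1 : 1 < x / y := (one_lt_div hy).2 hlt
  obtain ⟨n, hn⟩ := ((tendsto_pow_atTop_atTop_of_one_lt h1).eventually_gt_atTop C
    |>.and (eventually_ge_atTop 1)).exists
  have := h n hn.2
  have h3 := hn.1
  rw [div_pow, lt_div_iff₀ (pow_pos hy n)] at h3
  linarith

/-- `λ'ⁿ ≤ C λⁿ` as soon as `Q'ⁿ1 ≤ c Qⁿ1`. -/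
theorem eig_le {κ κ' : Kernel X X} [IsFiniteKernel κ] [IsFiniteKernel κ'] {ε ε' : ℝ}
    (hε : 0 < ε) (hε' : 0 < ε') {η : Measure X} [IsProbabilityMeasure η]
    (hmin : Minorizes (evolOp κ) ε η) (hmin' : Minorizes (evolOp κ') ε' η)
    {ν ν' : Measure X} [IsProbabilityMeasure ν] [IsProbabilityMeasure ν']
    (hν : FixedPt κ ν) (hν' : FixedPt κ' ν') {c : ℝ} (hc : 0 ≤ c)
    (h : ∀ n : ℕ, 1 ≤ n → ∀ x,
      (evolOp κ')^[n] (fun _ => (1:ℝ)) x ≤ c * (evolOp κ)^[n] (fun _ => (1:ℝ)) x) :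
    ∫ x, evolOp κ' (fun _ => (1:ℝ)) x ∂ν' ≤ ∫ x, evolOp κ (fun _ => (1:ℝ)) x ∂ν := by
  have b1 : BddMeas (fun _ : X => (1:ℝ)) := bm_const 1
  have p := int_Qn1_pos hε hmin 1 ν
  have p' := int_Qn1_pos hε' hmin' 1 ν'
  simp only [Function.iterate_one] at p p'
  refine pow_dom (C := c * (ε⁻¹ * ε⁻¹)) p' p fun n hn => ?_
  have e := hν.iter b1 n
  have e' := hν'.iter b1 n
  simp only [integral_const, probReal_univ, smul_eq_mul, mul_one] at e e'
  rw [← e, ← e']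
  have key : ∀ x, (evolOp κ)^[n] (fun _ => (1:ℝ)) x
      ≤ (ε⁻¹ * ε⁻¹) * ∫ q, (evolOp κ)^[n] (fun _ => 1) q ∂ν := by
    intro x
    obtain ⟨m, rfl⟩ : ∃ m, n = m + 1 := ⟨n - 1, by omega⟩
    simp only [Function.iterate_succ_apply']
    have hm := hmin _ (Qn_bm κ b1 m) (Qn_nonneg κ (fun _ => zero_le_one) m)
    have i := integral_mono (integrable_const (μ := ν) _)
      (bm_int (Q_bm κ (Qn_bm κ b1 m)) ν) (fun q => (hm q).1)
    simp only [integral_const, probReal_univ, smul_eq_mul, one_mul] at i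
    have i2 := mul_le_mul_of_nonneg_left i (show 0 ≤ ε⁻¹ * ε⁻¹ by positivity)
    refine (hm x).2.trans (le_trans (le_of_eq ?_) i2)
    field_simp
  have i := integral_mono (bm_int (Qn_bm κ' b1 n) ν') (integrable_const (μ := ν') _)
    (fun x => (h n hn x).trans (mul_le_mul_of_nonneg_left (key x) hc))
  simp only [integral_const, probReal_univ, smul_eq_mul, one_mul] at i
  rw [mul_assoc]
  exact i

end Helpers

/-- Equality of the approximate principal eigenvalues of two schemes related by a
TU decomposition: if `Q̃ⁿ = T ∘ Qⁿ ∘ U` for n ≥ 1, then Q̃ inherits a minorization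
condition (with constant εα² and the same measure η), both schemes admit unique invariant
probability measures ν and ν̃, and `ν(Q1) = ν̃(Q̃1)`, i.e. the associated eigenvalues
`(1/Δt) log ν(Q1)` coincide for any Δt > 0. -/
theorem TU_schemes_same_eigenvalue
    {X : Type*} [MeasurableSpace X] (κ κ' : Kernel X X) [IsFiniteKernel κ] [IsFiniteKernel κ']
    (ε : ℝ) (hε : ε ∈ Set.Ioo (0:ℝ) 1) (η : Measure X) [IsProbabilityMeasure η]
    (hmin : Minorizes (evolOp κ) ε η)
    (T U : (X → ℝ) → (X → ℝ))
    (hTlin : IsLinearMap ℝ T) (hUlin : IsLinearMap ℝ U)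
    (hTmaps : ∀ φ, BddMeas φ → BddMeas (T φ)) (hUmaps : ∀ φ, BddMeas φ → BddMeas (U φ))
    (hTpos : ∀ φ, BddMeas φ → (∀ x, 0 ≤ φ x) → ∀ x, 0 ≤ T φ x)
    (hUpos : ∀ φ, BddMeas φ → (∀ x, 0 ≤ φ x) → ∀ x, 0 ≤ U φ x)
    (α : ℝ) (hα : 0 < α)
    (hTbd : ∀ φ, BddMeas φ → (∀ x, 0 ≤ φ x) → ∀ x, α * φ x ≤ T φ x ∧ T φ x ≤ α⁻¹ * φ x)
    (hUbd : ∀ φ, BddMeas φ → (∀ x, 0 ≤ φ x) → ∀ x, α * φ x ≤ U φ x ∧ U φ x ≤ α⁻¹ * φ x)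
    (hTU : ∀ n : ℕ, 1 ≤ n → ∀ φ, BddMeas φ → ∀ x,
      (evolOp κ')^[n] φ x = T ((evolOp κ)^[n] (U φ)) x) :
    Minorizes (evolOp κ') (ε * α ^ 2) η ∧
    ∃ ν ν' : Measure X, IsProbabilityMeasure ν ∧ IsProbabilityMeasure ν' ∧
      FixedPt κ ν ∧ FixedPt κ' ν' ∧
      (∀ ρ : Measure X, IsProbabilityMeasure ρ → FixedPt κ ρ → ρ = ν) ∧
      (∀ ρ : Measure X, IsProbabilityMeasure ρ → FixedPt κ' ρ → ρ = ν') ∧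
      (∫ x, evolOp κ (fun _ => (1:ℝ)) x ∂ν = ∫ x, evolOp κ' (fun _ => (1:ℝ)) x ∂ν') ∧
      (∀ Δt : ℝ, 0 < Δt →
        (1 / Δt) * Real.log (∫ x, evolOp κ (fun _ => (1:ℝ)) x ∂ν) =
          (1 / Δt) * Real.log (∫ x, evolOp κ' (fun _ => (1:ℝ)) x ∂ν')) := by

  have e0 := hε.1
  have b1 : BddMeas (fun _ : X => (1:ℝ)) := bm_const 1
  have hai : (0:ℝ) < α⁻¹ := inv_pos.2 hα
  obtain ⟨x0⟩ : Nonempty X := nonempty_of_isProbabilityMeasure η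
  have hα1 : α ^ 2 ≤ 1 := by
    have h := hUbd _ b1 (fun _ => zero_le_one) x0
    have h2 : α * 1 ≤ α⁻¹ * 1 := h.1.trans h.2
    have h3 := mul_le_mul_of_nonneg_left h2 hα.le
    have h4 : α * (α⁻¹ * 1) = 1 := by field_simp
    nlinarith
  have hmin' : Minorizes (evolOp κ') (ε * α ^ 2) η := by
    intro φ hφ h q
    have t := hTU 1 le_rfl φ hφ q
    simp only [Function.iterate_one] at t
    have bU := hUmaps φ hφ
    have U0 := hUpos φ hφ h
    have mQ := hmin _ bU U0 q
    have tb := hTbd _ (Q_bm κ bU) (fun x => integral_nonneg U0) q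
    have l1 := integral_mono ((bm_int hφ η).const_mul α) (bm_int bU η) (fun x => (hUbd φ hφ h x).1)
    have l2 := integral_mono (bm_int bU η) ((bm_int hφ η).const_mul α⁻¹)
      (fun x => (hUbd φ hφ h x).2)
    rw [integral_const_mul] at l1 l2
    rw [t]
    constructor
    · calc ε * α ^ 2 * ∫ x, φ x ∂η = α * (ε * (α * ∫ x, φ x ∂η)) := by ring
        _ ≤ α * (ε * ∫ x, U φ x ∂η) := by gcongr
        _ ≤ α * evolOp κ (U φ) q := by gcongr; exact mQ.1
        _ ≤ _ := tb.1
    · calc T (evolOp κ (U φ)) q ≤ α⁻¹ * evolOp κ (U φ) q := tb.2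
        _ ≤ α⁻¹ * (ε⁻¹ * ∫ x, U φ x ∂η) := by gcongr; exact mQ.2
        _ ≤ α⁻¹ * (ε⁻¹ * (α⁻¹ * ∫ x, φ x ∂η)) := by gcongr
        _ = (ε * α ^ 2)⁻¹ * ∫ x, φ x ∂η := by rw [mul_inv, ← inv_pow]; ring
  have e0' : 0 < ε * α ^ 2 := by positivity
  have hε' : ε * α ^ 2 ∈ Set.Ioo (0:ℝ) 1 := ⟨e0', by nlinarith [hε.2]⟩
  refine ⟨hmin', ?_⟩
  obtain ⟨ν, hνP, hν, hνu⟩ := ergodic hε hmin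
  obtain ⟨ν', hνP', hν', hνu'⟩ := ergodic hε' hmin'
  have U1 := hUbd _ b1 (fun _ => zero_le_one)
  have bU := hUmaps _ b1
  have U0 := hUpos _ b1 (fun _ => zero_le_one)
  have up : ∀ n : ℕ, 1 ≤ n → ∀ x,
      (evolOp κ')^[n] (fun _ => (1:ℝ)) x
        ≤ (α⁻¹ * α⁻¹) * (evolOp κ)^[n] (fun _ => (1:ℝ)) x := by
    intro n hn x
    rw [hTU n hn _ b1 x, mul_assoc]
    refine (hTbd _ (Qn_bm κ bU n) (Qn_nonneg κ U0 n) x).2.trans ?_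
    exact mul_le_mul_of_nonneg_left
      (Qn_const_le κ bU (fun y => (U1 y).2.trans_eq (mul_one _)) n x) hai.le
  have dn : ∀ n : ℕ, 1 ≤ n → ∀ x,
      (evolOp κ)^[n] (fun _ => (1:ℝ)) x
        ≤ (α⁻¹ * α⁻¹) * (evolOp κ')^[n] (fun _ => (1:ℝ)) x := by
    intro n hn x
    rw [hTU n hn _ b1 x]
    have h1 := (hTbd _ (Qn_bm κ bU n) (Qn_nonneg κ U0 n) x).1
    have h2 := mul_le_mul_of_nonneg_left
      (Qn_const_ge κ bU (fun y => (mul_one α).symm.trans_le (U1 y).1) n x) hα.le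
    have h3 := mul_le_mul_of_nonneg_left (h2.trans h1) (mul_pos hai hai).le
    refine le_trans (le_of_eq ?_) h3
    field_simp
  have heq : ∫ x, evolOp κ (fun _ => (1:ℝ)) x ∂ν = ∫ x, evolOp κ' (fun _ => (1:ℝ)) x ∂ν' :=
    le_antisymm (eig_le e0' e0 hmin' hmin hν' hν (mul_pos hai hai).le dn)
      (eig_le e0 e0' hmin hmin' hν hν' (mul_pos hai hai).le up)
  exact ⟨ν, ν', hνP, hνP', hν, hν', hνu, hνu', heq, fun Δt _ => by rw [heq]⟩
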